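/- If the class ℱ = {(i,x) ↦ ψ(√(tᵢ′(x)/tᵢ(x))) : (𝐭,𝐭′)∈S̄²} of functions on 𝒳̄ = ⋃_{i=1}^n {i}×𝒳ᵢ is weak VC-major with dimension at most d ≥ 1, then for every density 𝐬∈𝕃, ε^{S̄}(𝐬) ≤ (11c₀/4)·√(c̄ₙ(d∧n))·[log(en/(d∧n))]^{3/2}, where c₀=1000 and c̄ₙ = 1 + (log 2)/log(en). -/

import Mathlib

open MeasureTheory Real Filter Set
open scoped Classical ENNReal

noncomputable section

/-- Squared Hellinger distance `h²(p·ν, q·ν) = (1/2)∫(√p−√q)² dν` between two densities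
with respect to the reference measure `ν`. -/
def hellSq {X : Type*} [MeasurableSpace X] (ν : Measure X) (p q : X → ℝ) : ℝ :=
  (1 / 2) * ∫ x, (Real.sqrt (p x) - Real.sqrt (q x)) ^ 2 ∂ν

/-- Hellinger-type distance `𝐡` between `n`-tuples of densities:
`𝐡²(𝐭,𝐭′)=Σᵢ h²(tᵢ·μᵢ, tᵢ′·μᵢ)`. -/
def bH {n : ℕ} {𝒳 : Fin n → Type*} [∀ i, MeasurableSpace (𝒳 i)]
    (μ : ∀ i, Measure (𝒳 i)) (t t' : ∀ i, 𝒳 i → ℝ) : ℝ :=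
  Real.sqrt (∑ i, hellSq (μ i) (t i) (t' i))

/-- `ψ(√(b/a))` where `ψ(x)=(x−1)/(x+1)`, `ψ(+∞)=1`, with the conventions
`a/0 = +∞` for `a>0` and `0/0 = 1`. -/
def psiR (a b : ℝ) : ℝ :=
  if a = 0 then (if b = 0 then 0 else 1)
  else (Real.sqrt (b / a) - 1) / (Real.sqrt (b / a) + 1)

/-- `Ψ(𝐱,𝐭,𝐭′) = Σᵢ ψ(√(tᵢ′(xᵢ)/tᵢ(xᵢ)))`. -/
def Psi {n : ℕ} {𝒳 : Fin n → Type*} (x : ∀ i, 𝒳 i) (t t' : ∀ i, 𝒳 i → ℝ) : ℝ :=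
  ∑ i, psiR (t i (x i)) (t' i (x i))

/-- `t` is an `n`-tuple of probability densities with respect to the `μ i`'s, i.e. an
element of `𝕃 = ∏ᵢ ℒᵢ`. -/
def IsDensityT {n : ℕ} {𝒳 : Fin n → Type*} [∀ i, MeasurableSpace (𝒳 i)]
    (μ : ∀ i, Measure (𝒳 i)) (t : ∀ i, 𝒳 i → ℝ) : Prop :=
  ∀ i, Measurable (t i) ∧ (∀ x, 0 ≤ t i x) ∧
    ∫⁻ x, ENNReal.ofReal (t i x) ∂(μ i) = 1

/-- The law `P_𝐬 = ⊗ᵢ (sᵢ·μᵢ)` of `X=(X₁,…,Xₙ)`. -/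
def Plaw {n : ℕ} {𝒳 : Fin n → Type*} [∀ i, MeasurableSpace (𝒳 i)]
    (μ : ∀ i, Measure (𝒳 i)) (s : ∀ i, 𝒳 i → ℝ) : Measure (∀ i, 𝒳 i) :=
  Measure.pi fun i => (μ i).withDensity fun x => ENNReal.ofReal (s i x)

/-- `𝐰^{S̄}(𝐬,y)`: expectation under `P_𝐬` of the supremum of the centred process
`|Ψ(X,𝐭,𝐭′)−E_𝐬Ψ(X,𝐭,𝐭′)|` over pairs `𝐭,𝐭′` in the Hellinger ball of radius `y`
of the countable set `S`, with the convention that the supremum over ∅ is 1. -/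
def wS {n : ℕ} {𝒳 : Fin n → Type*} [∀ i, MeasurableSpace (𝒳 i)]
    (μ : ∀ i, Measure (𝒳 i)) (s : ∀ i, 𝒳 i → ℝ) (S : Set (∀ i, 𝒳 i → ℝ)) (y : ℝ) : ℝ :=
  if Nonempty {p : (∀ i, 𝒳 i → ℝ) × (∀ i, 𝒳 i → ℝ) //
      p.1 ∈ S ∧ p.2 ∈ S ∧ bH μ s p.1 ≤ y ∧ bH μ s p.2 ≤ y} then
    ∫ x, (⨆ p : {p : (∀ i, 𝒳 i → ℝ) × (∀ i, 𝒳 i → ℝ) //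
        p.1 ∈ S ∧ p.2 ∈ S ∧ bH μ s p.1 ≤ y ∧ bH μ s p.2 ≤ y},
      |Psi x p.1.1 p.1.2 - ∫ x', Psi x' p.1.1 p.1.2 ∂(Plaw μ s)|) ∂(Plaw μ s)
  else 1

/-- `ε^{S̄}(𝐬) = sup{y ≥ 1 : 𝐰^{S̄}(𝐬,y) > 6c₀⁻¹y²}` with `c₀ = 1000`. -/
def epsS {n : ℕ} {𝒳 : Fin n → Type*} [∀ i, MeasurableSpace (𝒳 i)]
    (μ : ∀ i, Measure (𝒳 i)) (s : ∀ i, 𝒳 i → ℝ) (S : Set (∀ i, 𝒳 i → ℝ)) : ℝ :=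
  sSup {y : ℝ | 1 ≤ y ∧ 6 / 1000 * y ^ 2 < wS μ s S y}


/-- The class of sets `C` on `𝒴` is VC with dimension at most `d`: every finite set
shattered by `C` has cardinality at most `d`. -/
def VCdimLE {𝒴 : Type*} (C : Set (Set 𝒴)) (d : ℕ) : Prop :=
  ∀ F : Finset 𝒴,
    (∀ A : Finset 𝒴, A ⊆ F → ∃ c ∈ C, ∀ y ∈ F, y ∈ c ↔ y ∈ A) → F.card ≤ d

/-- A class `ℱ` of real-valued functions on `𝒴` is weak VC-major with dimension at
most `d` if for every `u ∈ ℝ` the class of level sets `{f > u}`, `f ∈ ℱ`, is VC on `𝒴`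
with dimension at most `d`. -/
def WeakVCMajorLE {𝒴 : Type*} (ℱ : Set (𝒴 → ℝ)) (d : ℕ) : Prop :=
  ∀ u : ℝ, VCdimLE {B | ∃ f ∈ ℱ, B = {y | u < f y}} d

/-!
On the ball `B^S(𝐬, y)` the process `Ψ` is a sum of functions bounded by `1` whose second moments
under `P_𝐬` add up to at most `8y²`, by a pointwise comparison of `s ψ²` with Hellinger
integrands. As `ψ` changes sign when `𝐭` and `𝐭′` are exchanged, it suffices to treat the positive
parts `f` of these functions. For a single level `u > 0`, symmetrization, Massart's finite class
inequality and the Sauer–Shelah lemma bound the expected discrepancy of the level sets `{f > u}`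
in terms of the number of sample points they contain; as that number is itself at most its mean
plus the discrepancy, one obtains a quadratic inequality for the expected discrepancy. The mean is
at most `8y²/u²` by Chebyshev's inequality, so averaging over the `m` levels `u = k/m` costs a
harmonic sum, at most `log (en/D)` for `m = n/D` and `D = d ∧ n`, and the level sets recover the
functions up to an error `n/m`, of order `D`. Solving `𝐰^{S̄}(𝐬, y) > 6y²/1000` for `y` yields the
bound on `ε^{S̄}(𝐬)`.
-/
section MaximalInequality

open scoped BigOperators

variable {ι : Type*} [Fintype ι]

lemma expect_exp_sum_sign_smul (a : ι → ℝ) :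
    𝔼 ε : ι → ℤˣ, exp (∑ i, ε i • a i) = ∏ i, cosh (a i) := by
  have hcosh (x : ℝ) : cosh x = (∑ e : ℤˣ, exp (e • x)) / 2 := by
    rw [cosh_eq, UnitsInt.univ, Finset.sum_pair (by decide), one_smul, Units.neg_smul, one_smul]
  simp only [hcosh, Finset.prod_div_distrib, Fintype.prod_sum, exp_sum,
    Fintype.expect_eq_sum_div_card]
  simp

lemma expect_exp_sum_sign_smul_le (a : ι → ℝ) :
    𝔼 ε : ι → ℤˣ, exp (∑ i, ε i • a i) ≤ exp ((∑ i, a i ^ 2) / 2) := by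
  rw [expect_exp_sum_sign_smul, Finset.sum_div, exp_sum]
  exact Finset.prod_le_prod (fun i _ => (cosh_pos _).le) fun i _ => cosh_le_exp_half_sq _

lemma exp_expect_le_expect_exp {α : Type*} [Fintype α] [Nonempty α] (f : α → ℝ) :
    exp (𝔼 x, f x) ≤ 𝔼 x, exp (f x) := by
  have hjensen := convexOn_exp.map_sum_le (t := Finset.univ)
    (w := fun _ : α => (Fintype.card α : ℝ)⁻¹) (p := f)
    (fun _ _ => by positivity) (by simp) (fun _ _ => mem_univ _)
  simpa only [smul_eq_mul, ← Finset.mul_sum, Fintype.expect_eq_sum_div_card,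
    div_eq_inv_mul] using hjensen

lemma exp_abs_le_exp_add_exp_neg (x : ℝ) : exp |x| ≤ exp x + exp (-x) := by
  rcases abs_choice x with h | h <;> rw [h] <;> linarith [exp_pos x, exp_pos (-x)]

lemma le_sqrt_of_forall_mul_le {x A v : ℝ} (hA : 0 ≤ A) (hv : 0 ≤ v)
    (h : ∀ l > 0, l * x ≤ A + l ^ 2 * v / 2) : x ≤ √(2 * v * A) := by
  refine le_of_not_gt fun hx => hx.not_ge (le_sqrt_of_sq_le ?_)
  have hx0 : 0 < x := (sqrt_nonneg _).trans_lt hx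
  have hquad (l : ℝ) : 0 ≤ v / 2 * (l * l) + -x * l + A := by
    rcases le_or_gt l 0 with hl | hl
    · have : 0 ≤ -l * x := mul_nonneg (neg_nonneg.2 hl) hx0.le
      have : 0 ≤ v / 2 * (l * l) := mul_nonneg (by linarith) (mul_self_nonneg l)
      linarith
    · linarith [h l hl]
  have hdiscrim := discrim_le_zero hquad
  rw [discrim] at hdiscrim
  linarith

variable {τ : Type*} {s : Finset τ} {a : τ → ι → ℝ} {v : ℝ}

lemma mul_expect_sup'_abs_sum_sign_smul_le (hs : s.Nonempty) (hv : ∀ t ∈ s, ∑ i, a t i ^ 2 ≤ v)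
    {l : ℝ} (hl : 0 ≤ l) :
    l * 𝔼 ε : ι → ℤˣ, s.sup' hs (fun t => |∑ i, ε i • a t i|)
      ≤ log (2 * s.card) + l ^ 2 * v / 2 := by
  have hmgf (c : ℝ) (hc : c ^ 2 = l ^ 2) (t : τ) (ht : t ∈ s) :
      𝔼 ε : ι → ℤˣ, exp (c * ∑ i, ε i • a t i) ≤ exp (l ^ 2 * v / 2) := by
    simp only [Finset.mul_sum, mul_smul_comm]
    refine (expect_exp_sum_sign_smul_le fun i => c * a t i).trans (exp_le_exp.2 ?_)
    simp only [mul_pow, hc, ← Finset.mul_sum]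
    have := hv t ht
    gcongr
  have hmax (ε : ι → ℤˣ) : exp (l * s.sup' hs (fun t => |∑ i, ε i • a t i|)) ≤
      ∑ t ∈ s, (exp (l * ∑ i, ε i • a t i) + exp (-l * ∑ i, ε i • a t i)) := by
    obtain ⟨t, ht, htmax⟩ := s.exists_mem_eq_sup' hs fun t => |∑ i, ε i • a t i|
    rw [htmax, ← abs_of_nonneg hl, ← abs_mul, abs_of_nonneg hl]
    refine (exp_abs_le_exp_add_exp_neg _).trans ?_
    rw [← neg_mul]
    exact Finset.single_le_sum
      (f := fun t => exp (l * ∑ i, ε i • a t i) + exp (-l * ∑ i, ε i • a t i))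
      (fun _ _ => by positivity) ht
  have : (0 : ℝ) < s.card := by exact_mod_cast hs.card_pos
  have hexp : exp (𝔼 ε : ι → ℤˣ, l * s.sup' hs (fun t => |∑ i, ε i • a t i|)) ≤
      2 * s.card * exp (l ^ 2 * v / 2) := calc
    _ ≤ 𝔼 ε : ι → ℤˣ, exp (l * s.sup' hs (fun t => |∑ i, ε i • a t i|)) :=
      exp_expect_le_expect_exp _
    _ ≤ 𝔼 ε : ι → ℤˣ, ∑ t ∈ s, (exp (l * ∑ i, ε i • a t i) + exp (-l * ∑ i, ε i • a t i)) :=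
      Finset.expect_le_expect fun ε _ => hmax ε
    _ = ∑ t ∈ s, (𝔼 ε : ι → ℤˣ, exp (l * ∑ i, ε i • a t i)
          + 𝔼 ε : ι → ℤˣ, exp (-l * ∑ i, ε i • a t i)) := by
      simp only [Finset.expect_sum_comm, Finset.expect_add_distrib]
    _ ≤ ∑ _t ∈ s, (exp (l ^ 2 * v / 2) + exp (l ^ 2 * v / 2)) :=
      Finset.sum_le_sum fun t ht => add_le_add (hmgf l rfl t ht) (hmgf (-l) (neg_sq l) t ht)
    _ = 2 * s.card * exp (l ^ 2 * v / 2) := by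
      rw [Finset.sum_const, nsmul_eq_mul]
      ring
  rw [← Finset.mul_expect] at hexp
  rwa [← le_log_iff_exp_le (by positivity), log_mul (by positivity) (exp_ne_zero _),
    log_exp] at hexp

theorem expect_sup'_abs_sum_sign_smul_le (hs : s.Nonempty)
    (hv : ∀ t ∈ s, ∑ i, a t i ^ 2 ≤ v) :
    𝔼 ε : ι → ℤˣ, s.sup' hs (fun t => |∑ i, ε i • a t i|) ≤ √(2 * v * log (2 * s.card)) := by
  obtain ⟨t, ht⟩ := hs
  have hv0 : 0 ≤ v := (Finset.sum_nonneg fun _ _ => sq_nonneg _).trans (hv t ht)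
  have hcard : (1 : ℝ) ≤ s.card := by exact_mod_cast Finset.card_pos.2 ⟨t, ht⟩
  exact le_sqrt_of_forall_mul_le (log_nonneg (by linarith)) hv0
    fun l hl => mul_expect_sup'_abs_sum_sign_smul_le _ hv hl.le

end MaximalInequality

section VCEntropy

lemma log_exp_one_mul_div {x y : ℝ} (hx : 0 < x) (hy : 0 < y) :
    log (exp 1 * x / y) = 1 + log x - log y := by
  rw [log_div (by positivity) hy.ne', log_mul (exp_ne_zero _) hx.ne', log_exp]

lemma one_le_log_exp_one_mul_div {x y : ℝ} (hy : 0 < y) (hyx : y ≤ x) :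
    1 ≤ log (exp 1 * x / y) := by
  rw [log_exp_one_mul_div (hy.trans_le hyx) hy]
  linarith [log_le_log hy hyx]

lemma log_exp_one_mul_le_mul_log {x y : ℝ} (hy : 1 ≤ y) (hyx : y ≤ x) :
    log (exp 1 * x) ≤ y * log (exp 1 * x / y) := by
  have hy0 : 0 < y := by linarith
  have hx0 : 0 < x := by linarith
  rw [log_exp_one_mul_div hx0 hy0, log_mul (exp_ne_zero _) hx0.ne', log_exp]
  have hprod : 0 ≤ (y - 1) * (log x - log y) :=
    mul_nonneg (sub_nonneg.2 hy) (sub_nonneg.2 (log_le_log hy0 hyx))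
  linarith [log_le_sub_one_of_pos hy0]

/-- The bound `c̄ₙ D log(en/D)`, with `c̄ₙ = 1 + log 2 / log(en)`, for the logarithm of twice the
number of subsets of an `n`-point set in a family of VC dimension at most `D`. -/
def vcEntropy (n D : ℕ) : ℝ :=
  (1 + log 2 / log (exp 1 * n)) * D * log (exp 1 * n / D)

lemma one_le_one_add_log_two_div {n : ℕ} (hn : 0 < n) :
    1 ≤ 1 + log 2 / log (exp 1 * n) := by
  have hn1 : (1 : ℝ) ≤ n := by exact_mod_cast hn
  have hlog : 0 ≤ log (exp 1 * n) := by
    simpa using zero_le_one.trans (one_le_log_exp_one_mul_div one_pos hn1)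
  have := log_nonneg one_le_two
  exact le_add_of_nonneg_right (by positivity)

lemma sum_choose_le_exp_mul_div_pow {n D : ℕ} (hD : 0 < D) (hDn : D ≤ n) :
    (∑ k ∈ Finset.Iic D, n.choose k : ℝ) ≤ (exp 1 * n / D) ^ D := by
  have : (0 : ℝ) < D := by exact_mod_cast hD
  have hn0 : (0 : ℝ) < n := by exact_mod_cast hD.trans_le hDn
  have hx1 : (D : ℝ) / n ≤ 1 := div_le_one_of_le₀ (by exact_mod_cast hDn) hn0.le
  have hbinom : (∑ k ∈ Finset.Iic D, n.choose k : ℝ) * (D / n) ^ D ≤ exp D := calc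
    _ = ∑ k ∈ Finset.Iic D, (n.choose k : ℝ) * (D / n) ^ D := Finset.sum_mul ..
    _ ≤ ∑ k ∈ Finset.Iic D, (n.choose k : ℝ) * (D / n) ^ k := by
      refine Finset.sum_le_sum fun k hk => ?_
      have := pow_le_pow_of_le_one (by positivity) hx1 (Finset.mem_Iic.1 hk)
      gcongr
    _ ≤ ∑ k ∈ Finset.range (n + 1), (n.choose k : ℝ) * (D / n) ^ k := by
      refine Finset.sum_le_sum_of_subset_of_nonneg (fun k hk => ?_) fun _ _ _ => by positivity
      exact Finset.mem_range_succ_iff.2 ((Finset.mem_Iic.1 hk).trans hDn)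
    _ = ((D : ℝ) / n + 1) ^ n := by simp [add_pow, mul_comm]
    _ ≤ exp (D / n) ^ n := by
      gcongr
      exact add_one_le_exp _
    _ = exp D := by
      rw [← exp_nat_mul, mul_div_cancel₀ _ hn0.ne']
  calc (∑ k ∈ Finset.Iic D, n.choose k : ℝ)
    _ ≤ exp D / (D / n) ^ D := (le_div_iff₀ (by positivity)).2 hbinom
    _ = (exp 1 * n / D) ^ D := by
      rw [← exp_one_pow, ← div_pow]
      congr 1
      field_simp

lemma card_le_of_vcDim_le {α : Type*} [Fintype α] [Nonempty α] {𝒜 : Finset (Finset α)} {d : ℕ}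
    (hd : 0 < d) (h𝒜 : 𝒜.vcDim ≤ d) :
    (𝒜.card : ℝ) ≤ (exp 1 * Fintype.card α / (min d (Fintype.card α) : ℕ)) ^
      min d (Fintype.card α) := by
  have hvc : 𝒜.vcDim ≤ min d (Fintype.card α) :=
    le_min h𝒜 (Finset.sup_le fun F _ => F.card_le_univ)
  refine le_trans ?_
    (sum_choose_le_exp_mul_div_pow (lt_min hd Fintype.card_pos) (min_le_right _ _))
  exact_mod_cast (𝒜.card_le_card_shatterer.trans Finset.card_shatterer_le_sum_vcDim).trans
    (Finset.sum_le_sum_of_subset (Finset.Iic_subset_Iic.2 hvc))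

lemma log_two_mul_le_vcEntropy {n D : ℕ} (hD : 0 < D) (hDn : D ≤ n) {N : ℝ} (hN : 0 < N)
    (hle : N ≤ (exp 1 * n / D) ^ D) : log (2 * N) ≤ vcEntropy n D := by
  have hD1 : (1 : ℝ) ≤ D := by exact_mod_cast hD
  have hDn' : (D : ℝ) ≤ n := by exact_mod_cast hDn
  have hlogN : log N ≤ D * log (exp 1 * n / D) := by
    rw [← log_pow]
    exact log_le_log hN hle
  have hpos : 0 < log (exp 1 * n) := by
    simpa using zero_lt_one.trans_le (one_le_log_exp_one_mul_div one_pos (hD1.trans hDn'))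
  have hlog2 : log 2 ≤ log 2 / log (exp 1 * n) * (D * log (exp 1 * n / D)) := by
    rw [div_mul_eq_mul_div, le_div_iff₀ hpos]
    exact mul_le_mul_of_nonneg_left (log_exp_one_mul_le_mul_log hD1 hDn') (log_nonneg one_le_two)
  rw [log_mul two_ne_zero hN.ne', vcEntropy]
  linarith

lemma log_two_mul_card_le_vcEntropy {α : Type*} [Fintype α] [Nonempty α]
    {𝒜 : Finset (Finset α)} (hne : 𝒜.Nonempty) {d : ℕ} (hd : 0 < d) (h𝒜 : 𝒜.vcDim ≤ d) :
    log (2 * 𝒜.card) ≤ vcEntropy (Fintype.card α) (min d (Fintype.card α)) :=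
  log_two_mul_le_vcEntropy (lt_min hd Fintype.card_pos) (min_le_right _ _)
    (by exact_mod_cast hne.card_pos) (card_le_of_vcDim_le hd h𝒜)

end VCEntropy

section SupAbs

variable {κ Ω : Type*} {F : κ → Ω → ℝ} {K : ℝ}

/-- The envelope `sup_j |F j|` of a family of functions; it is meaningful only where the family is
bounded, `⨆` of an unbounded family of reals being `0`. -/
def supAbs (F : κ → Ω → ℝ) (ω : Ω) : ℝ := ⨆ j, |F j ω|

lemma abs_le_supAbs (hK : ∀ j ω, |F j ω| ≤ K) (j : κ) (ω : Ω) : |F j ω| ≤ supAbs F ω :=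
  le_ciSup (f := fun j => |F j ω|) ⟨K, by rintro _ ⟨j, rfl⟩; exact hK j ω⟩ j

lemma supAbs_nonneg (ω : Ω) : 0 ≤ supAbs F ω := Real.iSup_nonneg fun _ => abs_nonneg _

lemma supAbs_le [Nonempty κ] {ω : Ω} {c : ℝ} (h : ∀ j, |F j ω| ≤ c) : supAbs F ω ≤ c := ciSup_le h

variable [Countable κ] [MeasurableSpace Ω]

lemma measurable_supAbs (hF : ∀ j, Measurable (F j)) : Measurable (supAbs F) :=
  Measurable.iSup fun j => (hF j).abs

lemma integrable_supAbs [Nonempty κ] (hF : ∀ j, Measurable (F j)) (hK : ∀ j ω, |F j ω| ≤ K)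
    (Q : Measure Ω) [IsFiniteMeasure Q] : Integrable (supAbs F) Q :=
  .of_bound (measurable_supAbs hF).aestronglyMeasurable K <| .of_forall fun ω => by
    rw [Real.norm_eq_abs, abs_of_nonneg (supAbs_nonneg ω)]
    exact supAbs_le fun j => hK j ω

end SupAbs

section Centered

variable {Ω : Type*} [MeasurableSpace Ω] {Q : Measure Ω} {f g : Ω → ℝ} {K δ : ℝ}

/-- The function `f` centred at its mean under `Q`. -/
def centered (Q : Measure Ω) (f : Ω → ℝ) (x : Ω) : ℝ := f x - ∫ y, f y ∂Q

lemma measurable_centered (hf : Measurable f) : Measurable (centered Q f) := hf.sub_const _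

variable [IsProbabilityMeasure Q]

lemma abs_centered_le (hf : ∀ x, |f x| ≤ K) (x : Ω) : |centered Q f x| ≤ 2 * K := by
  have hmean : |∫ y, f y ∂Q| ≤ K := by
    simpa using norm_integral_le_of_norm_le_const (μ := Q) (f := f) (.of_forall hf)
  rw [two_mul]
  exact (abs_sub _ _).trans (add_le_add (hf x) hmean)

lemma abs_centered_le_add (hf : Integrable f Q) (hg : Integrable g Q)
    (hfg : ∀ x, |f x - g x| ≤ δ) (x : Ω) :
    |centered Q f x| ≤ |centered Q g x| + 2 * δ := by
  have hsplit : centered Q f x = centered Q g x + centered Q (fun y => f y - g y) x := by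
    simp only [centered, integral_sub hf hg]
    ring
  rw [hsplit]
  exact (abs_add_le _ _).trans (by gcongr; exact abs_centered_le hfg x)

variable {κ : Type*} [Countable κ] [Nonempty κ] {F : κ → Ω → ℝ}

-- The centring is an average over an independent copy, which leaves the supremum by convexity.
lemma integral_supAbs_centered_le_prod (hF : ∀ j, Measurable (F j)) (hK : ∀ j x, |F j x| ≤ K) :
    ∫ x, supAbs (fun j => centered Q (F j)) x ∂Q ≤
      ∫ q, supAbs (fun j (q : Ω × Ω) => F j q.1 - F j q.2) q ∂Q.prod Q := by
  have hDm (j : κ) : Measurable fun q : Ω × Ω => F j q.1 - F j q.2 :=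
    ((hF j).comp measurable_fst).sub ((hF j).comp measurable_snd)
  have hDb (j : κ) (q : Ω × Ω) : |F j q.1 - F j q.2| ≤ 2 * K := by
    linarith [abs_sub (F j q.1) (F j q.2), hK j q.1, hK j q.2]
  have hint (j : κ) : Integrable (F j) Q :=
    .of_bound (hF j).aestronglyMeasurable K (.of_forall (hK j))
  rw [integral_prod _ (integrable_supAbs hDm hDb _)]
  refine integral_mono (integrable_supAbs (fun j => measurable_centered (hF j))
    (fun j => abs_centered_le (hK j)) _) (integrable_supAbs hDm hDb (Q.prod Q)).integral_prod_left
    fun x => supAbs_le fun j => ?_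
  have hDx (j : κ) : Measurable fun y => F j x - F j y := (hF j).const_sub _
  calc |centered Q (F j) x|
    _ = |∫ y, (F j x - F j y) ∂Q| := by
      rw [integral_sub (integrable_const _) (hint j)]
      simp [centered]
    _ ≤ ∫ y, |F j x - F j y| ∂Q := abs_integral_le_integral_abs
    _ ≤ ∫ y, supAbs (fun j (q : Ω × Ω) => F j q.1 - F j q.2) (x, y) ∂Q :=
      integral_mono ((integrable_const _).sub (hint j)).abs
        (integrable_supAbs hDx (fun j y => hDb j (x, y)) Q) fun y => abs_le_supAbs hDb j (x, y)

end Centered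

section Symmetrization

variable {ι : Type*} [Fintype ι] {𝒳 : ι → Type*}

/-- The sum `∑ᵢ aᵢ(xᵢ)` attached to the sample `x = (xᵢ)`. -/
def sampleSum (a : ∀ i, 𝒳 i → ℝ) (x : ∀ i, 𝒳 i) : ℝ := ∑ i, a i (x i)

lemma abs_sampleSum_le {a : ∀ i, 𝒳 i → ℝ} {c : ℝ} (ha : ∀ i u, |a i u| ≤ c) (x : ∀ i, 𝒳 i) :
    |sampleSum a x| ≤ Fintype.card ι * c :=
  (Finset.abs_sum_le_sum_abs _ _).trans <| by
    simpa using Finset.sum_le_card_nsmul Finset.univ _ _ fun i _ => ha i (x i)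

/-- Exchanges the two samples at the coordinates where the sign `ε` is `-1`. -/
def exchange (ε : ι → ℤˣ) (q : (∀ i, 𝒳 i) × (∀ i, 𝒳 i)) : (∀ i, 𝒳 i) × (∀ i, 𝒳 i) :=
  (fun i => if ε i = 1 then q.1 i else q.2 i, fun i => if ε i = 1 then q.2 i else q.1 i)

lemma sampleSum_exchange (a : ∀ i, 𝒳 i → ℝ) (ε : ι → ℤˣ) (q : (∀ i, 𝒳 i) × (∀ i, 𝒳 i)) :
    sampleSum a (exchange ε q).1 - sampleSum a (exchange ε q).2 =
      sampleSum (fun i u => ε i • a i u) q.1 - sampleSum (fun i u => ε i • a i u) q.2 := by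
  simp only [sampleSum, exchange, ← Finset.sum_sub_distrib]
  refine Finset.sum_congr rfl fun i _ => ?_
  rcases Int.units_eq_one_or (ε i) with h | h <;> simp [h, Units.neg_smul, sub_eq_add_neg, add_comm]

variable [∀ i, MeasurableSpace (𝒳 i)]

lemma measurable_sampleSum {a : ∀ i, 𝒳 i → ℝ} (ha : ∀ i, Measurable (a i)) :
    Measurable (sampleSum a) :=
  Finset.measurable_sum _ fun i _ => (ha i).comp (measurable_pi_apply i)

omit [Fintype ι] in
lemma measurable_exchange (ε : ι → ℤˣ) : Measurable (exchange (𝒳 := 𝒳) ε) := by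
  refine .prodMk (measurable_pi_lambda _ fun i => ?_) (measurable_pi_lambda _ fun i => ?_) <;>
    split_ifs <;> fun_prop

variable (P : ∀ i, Measure (𝒳 i)) [∀ i, IsProbabilityMeasure (P i)]

lemma measurePreserving_exchange (ε : ι → ℤˣ) :
    MeasurePreserving (exchange ε) ((Measure.pi P).prod (Measure.pi P))
      ((Measure.pi P).prod (Measure.pi P)) := by
  have hspan := Measure.FiniteSpanningSetsIn.pi fun i => (P i).toFiniteSpanningSetsIn
  refine ⟨measurable_exchange ε, (Measure.prod_eq_generateFrom generateFrom_pi generateFrom_pi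
    isPiSystem_pi isPiSystem_pi hspan hspan ?_).symm⟩
  rintro _ ⟨A, hA, rfl⟩ _ ⟨B, hB, rfl⟩
  have hpre : exchange ε ⁻¹' (univ.pi A ×ˢ univ.pi B) =
      (univ.pi fun i => if ε i = 1 then A i else B i) ×ˢ
        univ.pi fun i => if ε i = 1 then B i else A i := by
    ext q
    simp only [exchange, mem_preimage, mem_prod, mem_univ_pi, ← forall_and]
    refine forall_congr' fun i => ?_
    split_ifs
    exacts [Iff.rfl, and_comm]
  rw [Measure.map_apply (measurable_exchange ε)
    ((MeasurableSet.univ_pi fun i => hA i (mem_univ i)).prod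
      (MeasurableSet.univ_pi fun i => hB i (mem_univ i))), hpre]
  simp only [Measure.prod_prod, Measure.pi_pi, ← Finset.prod_mul_distrib]
  refine Finset.prod_congr rfl fun i _ => ?_
  split_ifs
  exacts [rfl, mul_comm _ _]

lemma integrable_sampleSum {a : ∀ i, 𝒳 i → ℝ} {c : ℝ} (ham : ∀ i, Measurable (a i))
    (hac : ∀ i u, |a i u| ≤ c) : Integrable (sampleSum a) (Measure.pi P) :=
  .of_bound (measurable_sampleSum ham).aestronglyMeasurable _ (.of_forall (abs_sampleSum_le hac))

variable {κ : Type*} [Countable κ] [Nonempty κ] {a : κ → ∀ i, 𝒳 i → ℝ} {c : ℝ}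

theorem integral_supAbs_centered_sampleSum_le (ham : ∀ j i, Measurable (a j i))
    (hac : ∀ j i u, |a j i u| ≤ c) (ε : ι → ℤˣ) :
    ∫ x, supAbs (fun j => centered (Measure.pi P) (sampleSum (a j))) x ∂Measure.pi P ≤
      2 * ∫ x, supAbs (fun j => sampleSum fun i u => ε i • a j i u) x ∂Measure.pi P := by
  set Q := Measure.pi P
  set D : κ → (∀ i, 𝒳 i) × (∀ i, 𝒳 i) → ℝ := fun j q => sampleSum (a j) q.1 - sampleSum (a j) q.2
  set R : κ → (∀ i, 𝒳 i) → ℝ := fun j => sampleSum fun i u => ε i • a j i u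
  have hSm (j : κ) : Measurable (sampleSum (a j)) := measurable_sampleSum (ham j)
  have hDm (j : κ) : Measurable (D j) := by fun_prop (disch := exact hSm _)
  have hRm (j : κ) : Measurable (R j) := measurable_sampleSum fun i => (ham j i).const_smul _
  have hRb (j : κ) (x : ∀ i, 𝒳 i) : |R j x| ≤ Fintype.card ι * c :=
    abs_sampleSum_le (fun i u => by
      rcases Int.units_eq_one_or (ε i) with h | h <;> simp [h, Units.neg_smul, hac j i u]) x
  have hR : Integrable (supAbs R) Q := integrable_supAbs hRm hRb Q
  calc ∫ x, supAbs (fun j => centered Q (sampleSum (a j))) x ∂Q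
    _ ≤ ∫ q, supAbs D q ∂Q.prod Q :=
      integral_supAbs_centered_le_prod hSm fun j => abs_sampleSum_le (hac j)
    _ = ∫ q, supAbs D (exchange ε q) ∂Q.prod Q := by
      nth_rw 1 [← (measurePreserving_exchange P ε).map_eq]
      exact integral_map (measurable_exchange ε).aemeasurable
        (measurable_supAbs hDm).aestronglyMeasurable
    _ ≤ ∫ q, (supAbs R q.1 + supAbs R q.2) ∂Q.prod Q := by
      refine integral_mono_of_nonneg (.of_forall fun q => supAbs_nonneg _)
        ((hR.comp_fst Q).add (hR.comp_snd Q)) (.of_forall fun q => supAbs_le fun j => ?_)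
      simp only [D, sampleSum_exchange]
      exact (abs_sub _ _).trans (add_le_add (abs_le_supAbs hRb j _) (abs_le_supAbs hRb j _))
    _ = 2 * ∫ x, supAbs R x ∂Q := by
      rw [integral_add (hR.comp_fst Q) (hR.comp_snd Q), integral_fun_fst, integral_fun_snd]
      simp [two_mul]

end Symmetrization

section Sqrt

variable {Ω : Type*} [MeasurableSpace Ω] {Q : Measure Ω} {f : Ω → ℝ}

lemma integrable_sqrt [IsFiniteMeasure Q] (hf : Integrable f Q) :
    Integrable (fun ω => √(f ω)) Q := by
  refine (hf.abs.add (integrable_const 1)).mono'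
    hf.aemeasurable.sqrt.aestronglyMeasurable (.of_forall fun ω => ?_)
  rw [Real.norm_eq_abs, abs_of_nonneg (sqrt_nonneg _), Pi.add_apply]
  refine sqrt_le_iff.2 ⟨by positivity, ?_⟩
  nlinarith [le_abs_self (f ω), abs_nonneg (f ω)]

lemma integral_sqrt_le_sqrt_integral [IsProbabilityMeasure Q] (hf0 : ∀ ω, 0 ≤ f ω)
    (hf : Integrable f Q) :
    ∫ ω, √(f ω) ∂Q ≤ √(∫ ω, f ω ∂Q) :=
  strictConcaveOn_sqrt.concaveOn.le_map_integral continuous_sqrt.continuousOn isClosed_Ici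
    (.of_forall hf0) hf (integrable_sqrt hf)

lemma le_of_le_two_mul_sqrt {x w a : ℝ} (hx : 0 ≤ x) (hw : 0 ≤ w) (ha : 0 ≤ a)
    (h : x ≤ 2 * √(2 * (w + x) * a)) : x ≤ 2 * √(2 * w * a) + 8 * a := by
  set q := √(2 * w * a)
  have hq : q ^ 2 = 2 * w * a := sq_sqrt (by positivity)
  have hsq : x ^ 2 ≤ 4 * q ^ 2 + 8 * a * x := calc
    x ^ 2 ≤ (2 * √(2 * (w + x) * a)) ^ 2 := by gcongr
    _ = 4 * q ^ 2 + 8 * a * x := by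
      rw [mul_pow, sq_sqrt (by positivity), hq]
      ring
  by_contra! hlt
  have hprod : 2 * q * (2 * q) < x * (x - 8 * a) :=
    mul_lt_mul'' (by linarith) (by linarith) (by positivity) (by positivity)
  linarith

end Sqrt

section Discrepancy

open scoped BigOperators

variable {ι κ : Type*} [Fintype ι] {𝒳 : ι → Type*}

/-- The indices of the sample points `xᵢ` lying in `Bᵢ`. -/
def hits (B : ∀ i, Set (𝒳 i)) (x : ∀ i, 𝒳 i) : Finset ι := {i | x i ∈ B i}

/-- The trace on the sample `x` of the class `(B j)`, as a family of sets of indices. -/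
def traces (B : κ → ∀ i, Set (𝒳 i)) (x : ∀ i, 𝒳 i) : Finset (Finset ι) :=
  {A | ∃ j, hits (B j) x = A}

variable {B : κ → ∀ i, Set (𝒳 i)} {x : ∀ i, 𝒳 i} {G W : ℝ}

lemma hits_mem_traces (j : κ) : hits (B j) x ∈ traces B x := by simp [traces]

lemma traces_nonempty [Nonempty κ] : (traces B x).Nonempty :=
  ⟨_, hits_mem_traces (Classical.arbitrary κ)⟩

lemma sampleSum_indicator (B : ∀ i, Set (𝒳 i)) (x : ∀ i, 𝒳 i) :
    sampleSum (fun i => (B i).indicator 1) x = (hits B x).card := by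
  simp [sampleSum, hits, Set.indicator_apply]

lemma sampleSum_smul_indicator (ε : ι → ℤˣ) (B : ∀ i, Set (𝒳 i)) (x : ∀ i, 𝒳 i) :
    sampleSum (fun i u => ε i • (B i).indicator (1 : 𝒳 i → ℝ) u) x =
      ∑ i, ε i • if i ∈ hits B x then (1 : ℝ) else 0 := by
  simp [sampleSum, hits, Set.indicator_apply]

lemma expect_supAbs_smul_indicator_le [Nonempty κ] {v : ℝ} (hv : ∀ j, (hits (B j) x).card ≤ v)
    (hG : log (2 * (traces B x).card) ≤ G) :
    𝔼 ε : ι → ℤˣ, supAbs (fun j => sampleSum fun i u => ε i • (B j i).indicator 1 u) x ≤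
      √(2 * v * G) := by
  have hv0 : 0 ≤ v := (Nat.cast_nonneg _).trans (hv (Classical.arbitrary κ))
  refine (Finset.expect_le_expect fun ε _ => supAbs_le fun j => ?_).trans <|
    (expect_sup'_abs_sum_sign_smul_le (a := fun t i => if i ∈ t then 1 else 0) (v := v)
      (traces_nonempty (B := B) (x := x)) fun t ht => ?_).trans (by gcongr)
  · rw [sampleSum_smul_indicator]
    exact Finset.le_sup' (fun t => |∑ i, ε i • if i ∈ t then (1 : ℝ) else 0|) (hits_mem_traces j)
  · obtain ⟨j, rfl⟩ := (Finset.mem_filter.1 ht).2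
    simpa using hv j

variable [∀ i, MeasurableSpace (𝒳 i)] (P : ∀ i, Measure (𝒳 i)) [∀ i, IsProbabilityMeasure (P i)]

lemma integral_sampleSum {a : ∀ i, 𝒳 i → ℝ} (ha : ∀ i, Integrable (a i) (P i)) :
    ∫ x, sampleSum a x ∂Measure.pi P = ∑ i, ∫ u, a i u ∂P i := by
  simp only [sampleSum]
  rw [integral_finsetSum _ fun i _ => integrable_comp_eval (ha i)]
  exact Finset.sum_congr rfl fun i _ => integral_comp_eval (ha i).aestronglyMeasurable

/-- The largest deviation, over the class `(B j)`, between the number of sample points hitting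
`B j` and its mean. -/
def discrepancy (B : κ → ∀ i, Set (𝒳 i)) : (∀ i, 𝒳 i) → ℝ :=
  supAbs fun j => centered (Measure.pi P) (sampleSum fun i => (B j i).indicator 1)

lemma abs_indicator_one_le {α : Type*} (s : Set α) (u : α) :
    |s.indicator (1 : α → ℝ) u| ≤ 1 := by
  by_cases h : u ∈ s <;> simp [h]

lemma abs_centered_le_discrepancy (j : κ) (x : ∀ i, 𝒳 i) :
    |centered (Measure.pi P) (sampleSum fun i => (B j i).indicator 1) x| ≤ discrepancy P B x :=
  abs_le_supAbs (F := fun j => centered (Measure.pi P) (sampleSum fun i => (B j i).indicator 1))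
    (fun _ => abs_centered_le (abs_sampleSum_le fun _ => abs_indicator_one_le _)) j x

variable (hB : ∀ j i, MeasurableSet (B j i))
include hB

lemma integrable_discrepancy [Countable κ] [Nonempty κ] :
    Integrable (discrepancy P B) (Measure.pi P) :=
  integrable_supAbs
    (fun j => measurable_centered (measurable_sampleSum fun i => measurable_one.indicator (hB j i)))
    (fun _ => abs_centered_le (abs_sampleSum_le fun _ => abs_indicator_one_le _)) _

lemma card_hits_le_add_discrepancy (hW : ∀ j, ∑ i, (P i).real (B j i) ≤ W) (j : κ) :
    (hits (B j) x).card ≤ W + discrepancy P B x := by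
  have hmean : ∫ y, sampleSum (fun i => (B j i).indicator 1) y ∂Measure.pi P ≤ W := by
    rw [integral_sampleSum (a := fun i => (B j i).indicator 1) P
      fun i => (integrable_const 1).indicator (hB j i)]
    simpa only [integral_indicator_one (hB j _)] using hW j
  have := (le_abs_self _).trans (abs_centered_le_discrepancy (B := B) P j x)
  rw [centered, sampleSum_indicator] at this
  linarith

lemma integral_discrepancy_le_expect [Countable κ] [Nonempty κ] :
    ∫ x, discrepancy P B x ∂Measure.pi P ≤ 2 * ∫ x, 𝔼 ε : ι → ℤˣ,
      supAbs (fun j => sampleSum fun i u => ε i • (B j i).indicator 1 u) x ∂Measure.pi P := by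
  have ham (j : κ) (i : ι) : Measurable ((B j i).indicator (1 : 𝒳 i → ℝ)) :=
    measurable_one.indicator (hB j i)
  have hab (ε : ι → ℤˣ) (j : κ) (i : ι) (u : 𝒳 i) :
      |ε i • (B j i).indicator (1 : 𝒳 i → ℝ) u| ≤ 1 := by
    have := abs_indicator_one_le (B j i) u
    rcases Int.units_eq_one_or (ε i) with h | h <;> simpa [h, Units.neg_smul] using this
  have hint (ε : ι → ℤˣ) : Integrable
      (supAbs fun j => sampleSum fun i u => ε i • (B j i).indicator 1 u) (Measure.pi P) :=
    integrable_supAbs (fun j => measurable_sampleSum fun i => (ham j i).const_smul (ε i))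
      (fun j => abs_sampleSum_le (hab ε j)) _
  calc ∫ x, discrepancy P B x ∂Measure.pi P
    _ = 𝔼 _ε : ι → ℤˣ, ∫ x, discrepancy P B x ∂Measure.pi P := (Fintype.expect_const _).symm
    _ ≤ 𝔼 ε : ι → ℤˣ, 2 * ∫ x, supAbs
          (fun j => sampleSum fun i u => ε i • (B j i).indicator 1 u) x ∂Measure.pi P :=
      Finset.expect_le_expect fun ε _ =>
        integral_supAbs_centered_sampleSum_le P ham (fun j i => abs_indicator_one_le _) ε
    _ = _ := by
      rw [← Finset.mul_expect]
      simp only [Fintype.expect_eq_sum_div_card, integral_div,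
        integral_finsetSum _ fun ε _ => hint ε]

theorem integral_discrepancy_le [Countable κ] [Nonempty κ]
    (hW : ∀ j, ∑ i, (P i).real (B j i) ≤ W) (hG : ∀ x, log (2 * (traces B x).card) ≤ G) :
    ∫ x, discrepancy P B x ∂Measure.pi P ≤ 2 * √(2 * W * G) + 8 * G := by
  have hdisc := integrable_discrepancy P hB
  have hdisc0 (x : ∀ i, 𝒳 i) : 0 ≤ discrepancy P B x := supAbs_nonneg x
  have hW0 : 0 ≤ W :=
    (Finset.sum_nonneg fun _ _ => measureReal_nonneg).trans (hW (Classical.arbitrary κ))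
  obtain ⟨x₀⟩ := nonempty_of_isProbabilityMeasure (Measure.pi P)
  have hG0 : 0 ≤ G := by
    refine (log_nonneg ?_).trans (hG x₀)
    have : (1 : ℝ) ≤ (traces B x₀).card := by exact_mod_cast (traces_nonempty (B := B)).card_pos
    linarith
  have hint : Integrable (fun x => 2 * (W + discrepancy P B x) * G) (Measure.pi P) :=
    (((integrable_const W).add hdisc).const_mul 2).mul_const G
  refine le_of_le_two_mul_sqrt (integral_nonneg hdisc0) hW0 hG0 ?_
  refine (integral_discrepancy_le_expect P hB).trans (mul_le_mul_of_nonneg_left ?_ zero_le_two)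
  calc ∫ x, 𝔼 ε : ι → ℤˣ,
        supAbs (fun j => sampleSum fun i u => ε i • (B j i).indicator 1 u) x ∂Measure.pi P
    _ ≤ ∫ x, √(2 * (W + discrepancy P B x) * G) ∂Measure.pi P :=
      integral_mono_of_nonneg
        (.of_forall fun x => Finset.expect_nonneg fun ε _ => supAbs_nonneg x)
        (integrable_sqrt hint) (.of_forall fun x =>
          expect_supAbs_smul_indicator_le (card_hits_le_add_discrepancy P hB hW) (hG x))
    _ ≤ √(∫ x, 2 * (W + discrepancy P B x) * G ∂Measure.pi P) :=
      integral_sqrt_le_sqrt_integral (fun x => by have := hdisc0 x; positivity) hint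
    _ = √(2 * (W + ∫ x, discrepancy P B x ∂Measure.pi P) * G) := by
      rw [integral_mul_const, integral_const_mul, integral_add (integrable_const W) hdisc]
      simp

end Discrepancy

section HarmonicBounds

variable {n D : ℕ}

lemma sum_one_div_le_log_exp_one_mul_div (hD : 0 < D) (hDn : D ≤ n) :
    ∑ k ∈ Finset.Icc 1 (n / D), 1 / (k : ℝ) ≤ log (exp 1 * n / D) := by
  have hharm := harmonic_le_one_add_log (n / D)
  rw [harmonic_eq_sum_Icc] at hharm
  push_cast at hharm
  have hD0 : (0 : ℝ) < D := by exact_mod_cast hD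
  have hn0 : (0 : ℝ) < n := by exact_mod_cast hD.trans_le hDn
  have hfloor : log (n / D : ℕ) ≤ log (n / D) :=
    log_le_log (by exact_mod_cast Nat.div_pos hDn hD) Nat.cast_div_le
  rw [log_div hn0.ne' hD0.ne'] at hfloor
  rw [log_exp_one_mul_div hn0 hD0]
  simp only [one_div]
  linarith

lemma cast_div_natDiv_le (hD : 0 < D) (hDn : D ≤ n) : (n : ℝ) / (n / D : ℕ) ≤ 2 * D := by
  have hm : 0 < n / D := Nat.div_pos hDn hD
  rw [div_le_iff₀ (by exact_mod_cast hm)]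
  have hdiv := Nat.div_add_mod n D
  have hmod := Nat.mod_lt n hD
  have : n ≤ 2 * D * (n / D) := by nlinarith
  exact_mod_cast this

end HarmonicBounds

lemma VCdimLE.mono {𝒴 : Type*} {C C' : Set (Set 𝒴)} {d : ℕ} (hC : VCdimLE C d) (h : C' ⊆ C) :
    VCdimLE C' d :=
  fun F hF => hC F fun A hA => (hF A hA).imp fun _ hc => ⟨h hc.1, hc.2⟩

lemma WeakVCMajorLE.mono {𝒴 : Type*} {ℱ ℱ' : Set (𝒴 → ℝ)} {d : ℕ} (hℱ : WeakVCMajorLE ℱ d)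
    (h : ℱ' ⊆ ℱ) : WeakVCMajorLE ℱ' d :=
  fun u => (hℱ u).mono fun _ ⟨f, hf, hB⟩ => ⟨f, h hf, hB⟩

section Superlevel

variable {ι κ : Type*} [Fintype ι] {𝒳 : ι → Type*} {d : ℕ}

lemma vcDim_traces_le {C : Set (Set (Σ i, 𝒳 i))} (hC : VCdimLE C d) {B : κ → ∀ i, Set (𝒳 i)}
    (hBC : ∀ j, {p : Σ i, 𝒳 i | p.2 ∈ B j p.1} ∈ C) (x : ∀ i, 𝒳 i) :
    (traces B x).vcDim ≤ d := by
  refine Finset.sup_le fun F hF => ?_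
  have hinj : Function.Injective fun i => (⟨i, x i⟩ : Σ i, 𝒳 i) :=
    fun i j h => (Sigma.mk.inj_iff.1 h).1
  rw [← Finset.card_image_of_injective F hinj]
  refine hC _ fun A _ => ?_
  obtain ⟨_, hU, hFU⟩ := Finset.mem_shatterer.1 hF (Finset.filter_subset (fun i => ⟨i, x i⟩ ∈ A) F)
  obtain ⟨j, rfl⟩ := (Finset.mem_filter.1 hU).2
  refine ⟨_, hBC j, Finset.forall_mem_image.2 fun i hi => ?_⟩
  simpa [hits, hi] using Finset.ext_iff.1 hFU i

/-- The family `({fᵢ > u})ᵢ` of level sets, one in each coordinate space. -/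
def superlevel (f : ∀ i, 𝒳 i → ℝ) (u : ℝ) (i : ι) : Set (𝒳 i) := {y | u < f i y}

lemma log_two_mul_card_traces_superlevel_le [Nonempty ι] [Nonempty κ] {f : κ → ∀ i, 𝒳 i → ℝ}
    (hd : 0 < d) (hVC : WeakVCMajorLE (range fun j (p : Σ i, 𝒳 i) => f j p.1 p.2) d)
    (u : ℝ) (x : ∀ i, 𝒳 i) :
    log (2 * (traces (fun j => superlevel (f j) u) x).card) ≤
      vcEntropy (Fintype.card ι) (min d (Fintype.card ι)) :=
  log_two_mul_card_le_vcEntropy traces_nonempty hd <|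
    vcDim_traces_le (hVC u) (fun j => ⟨_, mem_range_self j, rfl⟩) x

lemma measureReal_superlevel_le {X : Type*} [MeasurableSpace X] {ν : Measure X}
    [IsFiniteMeasure ν] {f : X → ℝ} (hf : Integrable (fun y => f y ^ 2) ν) {u : ℝ} (hu : 0 < u) :
    ν.real {y | u < f y} ≤ (∫ y, f y ^ 2 ∂ν) / u ^ 2 := by
  have hsub : {y | u < f y} ⊆ {y | u ^ 2 ≤ f y ^ 2} :=
    fun y (hy : u < f y) => show u ^ 2 ≤ f y ^ 2 from pow_le_pow_left₀ hu.le hy.le 2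
  rw [le_div_iff₀' (by positivity)]
  calc u ^ 2 * ν.real {y | u < f y}
    _ ≤ u ^ 2 * ν.real {y | u ^ 2 ≤ f y ^ 2} :=
      mul_le_mul_of_nonneg_left (measureReal_mono hsub) (sq_nonneg u)
    _ ≤ ∫ y, f y ^ 2 ∂ν :=
      mul_meas_ge_le_integral_of_nonneg (.of_forall fun y => sq_nonneg _) hf _

lemma card_filter_lt_Icc {m : ℕ} {v : ℝ} (hv : v ≤ m) :
    ((Finset.Icc 1 m).filter fun k : ℕ => (k : ℝ) < v).card = ⌈v⌉₊ - 1 := by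
  rw [← Nat.card_Ico]
  congr 1
  ext k
  simp only [Finset.mem_filter, Finset.mem_Icc, Finset.mem_Ico, ← Nat.lt_ceil]
  have := Nat.ceil_le.2 hv
  omega

lemma abs_posPart_sub_sum_ite_le {m : ℕ} (hm : 0 < m) {v : ℝ} (hv : v ≤ 1) :
    |v⁺ - (m : ℝ)⁻¹ * ∑ k ∈ Finset.Icc 1 m, if (k : ℝ) / m < v then (1 : ℝ) else 0| ≤
      (m : ℝ)⁻¹ := by
  have hm0 : (0 : ℝ) < m := by exact_mod_cast hm
  have hsum : (∑ k ∈ Finset.Icc 1 m, if (k : ℝ) / m < v then (1 : ℝ) else 0) =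
      (⌈v * m⌉₊ - 1 : ℕ) := by
    simp only [div_lt_iff₀ hm0, Finset.sum_boole]
    rw [card_filter_lt_Icc (mul_le_of_le_one_left hm0.le hv)]
  have hscale : v⁺ = (m : ℝ)⁻¹ * (v * m)⁺ := by
    rw [posPart_def, posPart_def, eq_inv_mul_iff_mul_eq₀ hm0.ne', mul_comm,
      max_mul_of_nonneg _ _ hm0.le, zero_mul]
  rw [hsum, hscale, ← mul_sub, abs_mul, abs_of_pos (inv_pos.2 hm0)]
  refine mul_le_of_le_one_right (inv_pos.2 hm0).le ?_
  rcases le_or_gt (v * m) 0 with h | h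
  · simp [posPart_eq_zero.2 h, Nat.ceil_eq_zero.2 h]
  · have hlt := Nat.ceil_lt_add_one h.le
    have hle := Nat.le_ceil (v * m)
    rw [posPart_of_nonneg h.le, Nat.cast_sub (Nat.one_le_ceil_iff.2 h), abs_le]
    constructor <;> push_cast <;> linarith

variable [∀ i, MeasurableSpace (𝒳 i)]

omit [Fintype ι] in
lemma measurableSet_superlevel {f : ∀ i, 𝒳 i → ℝ} (hf : ∀ i, Measurable (f i)) (u : ℝ) (i : ι) :
    MeasurableSet (superlevel f u i) :=
  measurableSet_lt measurable_const (hf i)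

omit [∀ i, MeasurableSpace (𝒳 i)] in
lemma abs_sampleSum_posPart_sub_le {f : ∀ i, 𝒳 i → ℝ} (hf1 : ∀ i y, f i y ≤ 1) {m : ℕ} (hm : 0 < m)
    (x : ∀ i, 𝒳 i) :
    |sampleSum (fun i y => (f i y)⁺) x - (m : ℝ)⁻¹ * ∑ k ∈ Finset.Icc 1 m,
      sampleSum (fun i => (superlevel f (k / m) i).indicator 1) x| ≤ Fintype.card ι / m := by
  have hswap : sampleSum (fun i y => (f i y)⁺) x - (m : ℝ)⁻¹ * ∑ k ∈ Finset.Icc 1 m,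
      sampleSum (fun i => (superlevel f (k / m) i).indicator 1) x =
      sampleSum (fun i y => (f i y)⁺ - (m : ℝ)⁻¹ * ∑ k ∈ Finset.Icc 1 m,
        if (k : ℝ) / m < f i y then (1 : ℝ) else 0) x := by
    simp only [sampleSum, superlevel, Set.indicator_apply, Finset.sum_sub_distrib, Finset.mul_sum]
    rw [Finset.sum_comm]
    rfl
  rw [hswap, div_eq_mul_inv]
  exact abs_sampleSum_le (fun i y => abs_posPart_sub_sum_ite_le hm (hf1 i y)) x

lemma abs_posPart_le {r c : ℝ} (hr : |r| ≤ c) : |r⁺| ≤ c := by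
  rw [abs_of_nonneg (posPart_nonneg r)]
  exact (sup_le (le_abs_self r) (abs_nonneg r)).trans hr

lemma centered_sampleSum_eq_sub_posPart (P : ∀ i, Measure (𝒳 i)) [∀ i, IsProbabilityMeasure (P i)]
    {f : ∀ i, 𝒳 i → ℝ} {c : ℝ} (hfm : ∀ i, Measurable (f i)) (hfc : ∀ i y, |f i y| ≤ c)
    (x : ∀ i, 𝒳 i) :
    centered (Measure.pi P) (sampleSum f) x =
      centered (Measure.pi P) (sampleSum fun i y => (f i y)⁺) x
        - centered (Measure.pi P) (sampleSum fun i y => ((-f) i y)⁺) x := by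
  have hpos : Integrable (sampleSum fun i y => (f i y)⁺) (Measure.pi P) :=
    integrable_sampleSum P (fun i => (hfm i).sup_const 0) fun i y => abs_posPart_le (hfc i y)
  have hneg : Integrable (sampleSum fun i y => ((-f) i y)⁺) (Measure.pi P) :=
    integrable_sampleSum P (fun i => (hfm i).neg.sup_const 0) fun i y =>
      abs_posPart_le ((abs_neg _).trans_le (hfc i y))
  have hsplit : sampleSum f = fun x =>
      sampleSum (fun i y => (f i y)⁺) x - sampleSum (fun i y => ((-f) i y)⁺) x := by
    ext x
    simp only [sampleSum, ← Finset.sum_sub_distrib, Pi.neg_apply, posPart_neg, posPart_sub_negPart]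
  simp only [hsplit, centered, integral_sub hpos hneg]
  ring

variable {f : κ → ∀ i, 𝒳 i → ℝ} (P : ∀ i, Measure (𝒳 i)) [∀ i, IsProbabilityMeasure (P i)]
  (hfm : ∀ j i, Measurable (f j i)) {v G : ℝ}
include hfm

lemma integral_discrepancy_superlevel_le [Countable κ] [Nonempty κ]
    (hf1 : ∀ j i y, |f j i y| ≤ 1) (hv : ∀ j, ∑ i, ∫ y, f j i y ^ 2 ∂P i ≤ v) {u : ℝ} (hu : 0 < u)
    (hG : ∀ x, log (2 * (traces (fun j => superlevel (f j) u) x).card) ≤ G) :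
    ∫ x, discrepancy P (fun j => superlevel (f j) u) x ∂Measure.pi P ≤
      2 * √(2 * v * G) / u + 8 * G := by
  have hsq (j : κ) (i : ι) : Integrable (fun y => f j i y ^ 2) (P i) :=
    .of_bound ((hfm j i).pow_const 2).aestronglyMeasurable 1 <| .of_forall fun y => by
      rw [norm_pow]
      exact pow_le_one₀ (norm_nonneg _) (hf1 j i y)
  have hW (j : κ) : ∑ i, (P i).real (superlevel (f j) u i) ≤ v / u ^ 2 := calc
    _ ≤ ∑ i, (∫ y, f j i y ^ 2 ∂P i) / u ^ 2 :=
      Finset.sum_le_sum fun i _ => measureReal_superlevel_le (hsq j i) hu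
    _ = (∑ i, ∫ y, f j i y ^ 2 ∂P i) / u ^ 2 := (Finset.sum_div ..).symm
    _ ≤ v / u ^ 2 := by
      gcongr
      exact hv j
  refine (integral_discrepancy_le P (fun j => measurableSet_superlevel (hfm j) u) hW hG).trans_eq ?_
  rw [show 2 * (v / u ^ 2) * G = 2 * v * G / u ^ 2 by ring, sqrt_div' _ (by positivity),
    sqrt_sq hu.le, mul_div_assoc]

lemma abs_centered_sampleSum_posPart_le (hf1 : ∀ j i y, |f j i y| ≤ 1) {m : ℕ} (hm : 0 < m)
    (j : κ) (x : ∀ i, 𝒳 i) :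
    |centered (Measure.pi P) (sampleSum fun i y => (f j i y)⁺) x| ≤
      (m : ℝ)⁻¹ * ∑ k ∈ Finset.Icc 1 m, discrepancy P (fun j => superlevel (f j) (k / m)) x
        + 2 * (Fintype.card ι / m) := by
  have hind (k : ℕ) : Integrable (sampleSum fun i => (superlevel (f j) (k / m) i).indicator 1)
      (Measure.pi P) :=
    integrable_sampleSum P
      (fun i => measurable_one.indicator (measurableSet_superlevel (hfm j) _ i))
      fun i => abs_indicator_one_le _
  have hpos : Integrable (sampleSum fun i y => (f j i y)⁺) (Measure.pi P) :=
    integrable_sampleSum P (fun i => (hfm j i).sup_const 0) fun i y => abs_posPart_le (hf1 j i y)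
  refine (abs_centered_le_add hpos ((integrable_finsetSum _ fun k _ => hind k).const_mul _)
    (abs_sampleSum_posPart_sub_le (fun i y => (abs_le.1 (hf1 j i y)).2) hm) x).trans ?_
  gcongr
  have hsum : centered (Measure.pi P) (fun x => (m : ℝ)⁻¹ * ∑ k ∈ Finset.Icc 1 m,
      sampleSum (fun i => (superlevel (f j) (k / m) i).indicator 1) x) x =
      (m : ℝ)⁻¹ * ∑ k ∈ Finset.Icc 1 m, centered (Measure.pi P)
        (sampleSum fun i => (superlevel (f j) (k / m) i).indicator 1) x := by
    simp only [centered, integral_const_mul, integral_finsetSum _ fun k _ => hind k,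
      Finset.sum_sub_distrib, mul_sub]
  rw [hsum, abs_mul, abs_of_nonneg (by positivity)]
  gcongr
  exact (Finset.abs_sum_le_sum_abs _ _).trans
    (Finset.sum_le_sum fun k _ => abs_centered_le_discrepancy
      (B := fun j => superlevel (f j) (k / m)) P j x)

variable [Countable κ] [Nonempty κ] (hf1 : ∀ j i y, |f j i y| ≤ 1)
  (hv : ∀ j, ∑ i, ∫ y, f j i y ^ 2 ∂P i ≤ v)
include hf1 hv

lemma integral_supAbs_posPart_le_of_log_card_le {m : ℕ} (hm : 0 < m)
    (hG : ∀ u x, log (2 * (traces (fun j => superlevel (f j) u) x).card) ≤ G) :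
    ∫ x, supAbs (fun j => centered (Measure.pi P) (sampleSum fun i y => (f j i y)⁺)) x
        ∂Measure.pi P ≤
      2 * √(2 * v * G) * ∑ k ∈ Finset.Icc 1 m, 1 / (k : ℝ) + 8 * G
        + 2 * (Fintype.card ι / m) := by
  have hm0 : (0 : ℝ) < m := by exact_mod_cast hm
  have hdisc (k : ℕ) : Integrable (discrepancy P fun j => superlevel (f j) (k / m))
      (Measure.pi P) :=
    integrable_discrepancy P fun j => measurableSet_superlevel (hfm j) _
  have hint : Integrable (fun x => (m : ℝ)⁻¹ * ∑ k ∈ Finset.Icc 1 m,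
      discrepancy P (fun j => superlevel (f j) (k / m)) x) (Measure.pi P) :=
    (integrable_finsetSum _ fun k _ => hdisc k).const_mul _
  calc _ ≤ ∫ x, ((m : ℝ)⁻¹ * ∑ k ∈ Finset.Icc 1 m,
          discrepancy P (fun j => superlevel (f j) (k / m)) x + 2 * (Fintype.card ι / m))
        ∂Measure.pi P :=
      integral_mono_of_nonneg (.of_forall fun x => supAbs_nonneg x)
        (hint.add (integrable_const _)) (.of_forall fun x => supAbs_le fun j =>
          abs_centered_sampleSum_posPart_le P hfm hf1 hm j x)
    _ = (m : ℝ)⁻¹ * ∑ k ∈ Finset.Icc 1 m,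
          ∫ x, discrepancy P (fun j => superlevel (f j) (k / m)) x ∂Measure.pi P
        + 2 * (Fintype.card ι / m) := by
      rw [integral_add hint (integrable_const _), integral_const_mul,
        integral_finsetSum _ fun k _ => hdisc k]
      simp
    _ ≤ (m : ℝ)⁻¹ * ∑ k ∈ Finset.Icc 1 m, (2 * √(2 * v * G) / (k / m) + 8 * G)
        + 2 * (Fintype.card ι / m) := by
      gcongr with k hk
      have : (0 : ℝ) < k := by exact_mod_cast (Finset.mem_Icc.1 hk).1
      exact integral_discrepancy_superlevel_le P hfm hf1 hv (by positivity) (hG _)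
    _ = 2 * √(2 * v * G) * ∑ k ∈ Finset.Icc 1 m, 1 / (k : ℝ) + 8 * G
        + 2 * (Fintype.card ι / m) := by
      have hscale (k : ℕ) : 2 * √(2 * v * G) / ((k : ℝ) / m) =
          m * (2 * √(2 * v * G) * (1 / k)) := by
        rw [div_div_eq_mul_div]
        ring
      simp only [hscale, Finset.sum_add_distrib, ← Finset.mul_sum, Finset.sum_const, Nat.card_Icc,
        Nat.add_sub_cancel, nsmul_eq_mul]
      rw [mul_left_comm 8, ← mul_add, inv_mul_cancel_left₀ hm0.ne']

variable [Nonempty ι] {d : ℕ} (hd : 0 < d)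
  (hVC : WeakVCMajorLE (range fun j (p : Σ i, 𝒳 i) => f j p.1 p.2) d)
include hd hVC

-- With `m = n / D` levels the discretisation error is of the order of the other terms.
lemma integral_supAbs_posPart_le_of_weakVCMajorLE {n D : ℕ} (hn : n = Fintype.card ι)
    (hD : D = min d n) :
    ∫ x, supAbs (fun j => centered (Measure.pi P) (sampleSum fun i y => (f j i y)⁺)) x
        ∂Measure.pi P ≤
      2 * √(2 * v * vcEntropy n D) * log (exp 1 * n / D) + 8 * vcEntropy n D + 4 * D := by
  have hDn : D ≤ n := hD ▸ min_le_right d n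
  have hD0 : 0 < D := hD ▸ lt_min hd (hn ▸ Fintype.card_pos)
  refine (integral_supAbs_posPart_le_of_log_card_le P hfm hf1 hv (Nat.div_pos hDn hD0)
    (log_two_mul_card_traces_superlevel_le hd hVC)).trans ?_
  rw [← hn, ← hD]
  have hlevels := mul_le_mul_of_nonneg_left (sum_one_div_le_log_exp_one_mul_div hD0 hDn)
    (by positivity : 0 ≤ 2 * √(2 * v * vcEntropy n D))
  linarith [cast_div_natDiv_le hD0 hDn]

theorem integral_supAbs_centered_le_of_weakVCMajorLE {n D : ℕ} (hn : n = Fintype.card ι)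
    (hD : D = min d n) (hneg : ∀ j, ∃ j', f j' = -f j) :
    ∫ x, supAbs (fun j => centered (Measure.pi P) (sampleSum (f j))) x ∂Measure.pi P ≤
      4 * √(2 * v * vcEntropy n D) * log (exp 1 * n / D) + 16 * vcEntropy n D + 8 * D := by
  set F : κ → (∀ i, 𝒳 i) → ℝ := fun j =>
    centered (Measure.pi P) (sampleSum fun i y => (f j i y)⁺)
  have hFb (j : κ) (x : ∀ i, 𝒳 i) : |F j x| ≤ 2 * (Fintype.card ι * 1) :=
    abs_centered_le (abs_sampleSum_le fun i y => abs_posPart_le (hf1 j i y)) x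
  have hint : Integrable (supAbs F) (Measure.pi P) :=
    integrable_supAbs (fun j => measurable_centered
      (measurable_sampleSum fun i => (hfm j i).sup_const 0)) hFb _
  calc ∫ x, supAbs (fun j => centered (Measure.pi P) (sampleSum (f j))) x ∂Measure.pi P
    _ ≤ ∫ x, 2 * supAbs F x ∂Measure.pi P := by
      refine integral_mono_of_nonneg (.of_forall fun x => supAbs_nonneg x) (hint.const_mul 2)
        (.of_forall fun x => supAbs_le fun j => ?_)
      obtain ⟨j', hj'⟩ := hneg j
      rw [centered_sampleSum_eq_sub_posPart P (hfm j) (hf1 j), ← hj']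
      exact ((abs_sub _ _).trans (add_le_add (abs_le_supAbs hFb j x)
        (abs_le_supAbs hFb j' x))).trans_eq (two_mul _).symm
    _ ≤ _ := by
      rw [integral_const_mul]
      linarith [integral_supAbs_posPart_le_of_weakVCMajorLE P hfm hf1 hv hd hVC hn hD]

end Superlevel

section Psi

variable {a b s : ℝ}

lemma psiR_eq_sqrt_sub_div_sqrt_add (ha : 0 ≤ a) (hb : 0 ≤ b) :
    psiR a b = (√b - √a) / (√b + √a) := by
  unfold psiR
  rcases ha.eq_or_lt with rfl | ha
  · rcases hb.eq_or_lt with rfl | hb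
    · simp
    · simp [hb.ne', (sqrt_pos.2 hb).ne']
  · have := sqrt_pos.2 ha
    rw [if_neg ha.ne', sqrt_div hb]
    field_simp

lemma psiR_swap (ha : 0 ≤ a) (hb : 0 ≤ b) : psiR b a = -psiR a b := by
  rw [psiR_eq_sqrt_sub_div_sqrt_add ha hb, psiR_eq_sqrt_sub_div_sqrt_add hb ha, add_comm √a,
    ← neg_div, neg_sub]

lemma abs_psiR_le_one (ha : 0 ≤ a) (hb : 0 ≤ b) : |psiR a b| ≤ 1 := by
  rw [psiR_eq_sqrt_sub_div_sqrt_add ha hb, abs_div,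
    abs_of_nonneg (add_nonneg (sqrt_nonneg b) (sqrt_nonneg a))]
  refine div_le_one_of_le₀ (abs_sub_le_iff.2 ⟨?_, ?_⟩) (by positivity) <;>
    linarith [sqrt_nonneg a, sqrt_nonneg b]

-- The right-hand side is `(√b - √a)² + (2√s - √a - √b)²`: the first square bounds the left-hand
-- side if `√s ≤ √a + √b`, and otherwise the second one is at least `s`.
lemma mul_psiR_sq_le (ha : 0 ≤ a) (hb : 0 ≤ b) (hs : 0 ≤ s) :
    s * psiR a b ^ 2 ≤ 2 * (√s - √a) ^ 2 + 2 * (√s - √b) ^ 2 := by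
  have hψ : psiR a b * (√b + √a) = √b - √a := by
    rw [psiR_eq_sqrt_sub_div_sqrt_add ha hb]
    refine div_mul_cancel_of_imp fun h => ?_
    linarith [sqrt_nonneg a, sqrt_nonneg b]
  have hψ1 : psiR a b ^ 2 ≤ 1 := (sq_le_one_iff_abs_le_one _).2 (abs_psiR_le_one ha hb)
  have hsum : 2 * (√s - √a) ^ 2 + 2 * (√s - √b) ^ 2 =
      (√b - √a) ^ 2 + (2 * √s - √a - √b) ^ 2 := by ring
  rw [hsum]
  rcases le_or_gt √s (√b + √a) with h | h
  · calc s * psiR a b ^ 2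
      _ = √s ^ 2 * psiR a b ^ 2 := by rw [sq_sqrt hs]
      _ ≤ (√b + √a) ^ 2 * psiR a b ^ 2 := by gcongr
      _ = (√b - √a) ^ 2 := by rw [← hψ, mul_pow, mul_comm]
      _ ≤ _ := le_add_of_nonneg_right (sq_nonneg _)
  · calc s * psiR a b ^ 2
      _ ≤ s := mul_le_of_le_one_right hs hψ1
      _ = √s ^ 2 := (sq_sqrt hs).symm
      _ ≤ (2 * √s - √a - √b) ^ 2 := by
        have := sqrt_nonneg s
        gcongr
        linarith
      _ ≤ _ := le_add_of_nonneg_left (sq_nonneg _)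

lemma measurable_psiR {X : Type*} [MeasurableSpace X] {t t' : X → ℝ} (ht : Measurable t)
    (ht' : Measurable t') (ht0 : ∀ x, 0 ≤ t x) (ht0' : ∀ x, 0 ≤ t' x) :
    Measurable fun x => psiR (t x) (t' x) := by
  simp only [psiR_eq_sqrt_sub_div_sqrt_add (ht0 _) (ht0' _)]
  fun_prop

end Psi

section Hellinger

variable {n : ℕ} {𝒳 : Fin n → Type*} [∀ i, MeasurableSpace (𝒳 i)] {μ : ∀ i, Measure (𝒳 i)}
  {s t t' : ∀ i, 𝒳 i → ℝ}

variable (μ s) in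
/-- The law `sᵢ·μᵢ` of the coordinate `Xᵢ` under `P_𝐬`. -/
def marginal (i : Fin n) : Measure (𝒳 i) := (μ i).withDensity fun x => ENNReal.ofReal (s i x)

namespace IsDensityT

lemma isProbabilityMeasure_marginal (hs : IsDensityT μ s) (i : Fin n) :
    IsProbabilityMeasure (marginal μ s i) :=
  ⟨by rw [marginal, withDensity_apply _ .univ, Measure.restrict_univ, (hs i).2.2]⟩

lemma integrable (ht : IsDensityT μ t) (i : Fin n) : Integrable (t i) (μ i) := by
  refine ⟨(ht i).1.aestronglyMeasurable, ?_⟩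
  rw [hasFiniteIntegral_iff_ofReal (.of_forall (ht i).2.1), (ht i).2.2]
  exact ENNReal.one_lt_top

lemma integrable_sqrt_sub_sqrt_sq (hs : IsDensityT μ s) (ht : IsDensityT μ t) (i : Fin n) :
    Integrable (fun x => (√(s i x) - √(t i x)) ^ 2) (μ i) := by
  refine ((hs.integrable i).add (ht.integrable i)).mono'
    (((hs i).1.sqrt.sub (ht i).1.sqrt).pow_const 2).aestronglyMeasurable (.of_forall fun x => ?_)
  rw [Real.norm_eq_abs, abs_of_nonneg (sq_nonneg _), sub_sq, sq_sqrt ((hs i).2.1 x),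
    sq_sqrt ((ht i).2.1 x), Pi.add_apply]
  have : 0 ≤ 2 * √(s i x) * √(t i x) := by positivity
  linarith

lemma integral_psiR_sq_le (hs : IsDensityT μ s) (ht : IsDensityT μ t) (ht' : IsDensityT μ t')
    (i : Fin n) :
    ∫ x, psiR (t i x) (t' i x) ^ 2 ∂marginal μ s i ≤
      4 * hellSq (μ i) (s i) (t i) + 4 * hellSq (μ i) (s i) (t' i) := by
  have hst := hs.integrable_sqrt_sub_sqrt_sq ht i
  have hst' := hs.integrable_sqrt_sub_sqrt_sq ht' i
  rw [marginal, integral_withDensity_eq_integral_toReal_smul (hs i).1.ennreal_ofReal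
    (.of_forall fun _ => ENNReal.ofReal_lt_top)]
  calc ∫ x, (ENNReal.ofReal (s i x)).toReal • psiR (t i x) (t' i x) ^ 2 ∂μ i
    _ ≤ ∫ x, (2 * (√(s i x) - √(t i x)) ^ 2 + 2 * (√(s i x) - √(t' i x)) ^ 2) ∂μ i := by
      refine integral_mono_of_nonneg (.of_forall fun x => by positivity)
        ((hst.const_mul 2).add (hst'.const_mul 2)) (.of_forall fun x => ?_)
      simp only [smul_eq_mul, ENNReal.toReal_ofReal ((hs i).2.1 x)]
      exact mul_psiR_sq_le ((ht i).2.1 x) ((ht' i).2.1 x) ((hs i).2.1 x)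
    _ = 4 * hellSq (μ i) (s i) (t i) + 4 * hellSq (μ i) (s i) (t' i) := by
      rw [integral_add (hst.const_mul 2) (hst'.const_mul 2), integral_const_mul,
        integral_const_mul, hellSq, hellSq]
      ring

lemma sum_integral_psiR_sq_le (hs : IsDensityT μ s) (ht : IsDensityT μ t)
    (ht' : IsDensityT μ t') :
    ∑ i, ∫ x, psiR (t i x) (t' i x) ^ 2 ∂marginal μ s i ≤ 4 * bH μ s t ^ 2 + 4 * bH μ s t' ^ 2 := by
  have hbH (t : ∀ i, 𝒳 i → ℝ) : bH μ s t ^ 2 = ∑ i, hellSq (μ i) (s i) (t i) :=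
    sq_sqrt (Finset.sum_nonneg fun i _ =>
      mul_nonneg one_half_pos.le (integral_nonneg fun x => sq_nonneg _))
  rw [hbH, hbH, Finset.mul_sum, Finset.mul_sum, ← Finset.sum_add_distrib]
  exact Finset.sum_le_sum fun i _ => hs.integral_psiR_sq_le ht ht' i

end IsDensityT

/-- The pairs of elements of `S` in the Hellinger ball `B^S(𝐬, y)`, over which the supremum
defining `𝐰^{S̄}(𝐬, y)` is taken. -/
abbrev BallPair (μ : ∀ i, Measure (𝒳 i)) (s : ∀ i, 𝒳 i → ℝ) (S : Set (∀ i, 𝒳 i → ℝ)) (y : ℝ) :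
    Type _ :=
  {p : (∀ i, 𝒳 i → ℝ) × (∀ i, 𝒳 i → ℝ) //
    p.1 ∈ S ∧ p.2 ∈ S ∧ bH μ s p.1 ≤ y ∧ bH μ s p.2 ≤ y}

variable {S : Set (∀ i, 𝒳 i → ℝ)} {y : ℝ}

lemma countable_ballPair (hS : S.Countable) : Countable (BallPair μ s S y) := by
  have hsub : {p : (∀ i, 𝒳 i → ℝ) × (∀ i, 𝒳 i → ℝ) |
      p.1 ∈ S ∧ p.2 ∈ S ∧ bH μ s p.1 ≤ y ∧ bH μ s p.2 ≤ y} ⊆ S ×ˢ S :=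
    fun _ hp => ⟨hp.1, hp.2.1⟩
  exact ((hS.prod hS).mono hsub).to_subtype

lemma wS_eq_integral_supAbs [Nonempty (BallPair μ s S y)] :
    wS μ s S y = ∫ x, supAbs (fun p : BallPair μ s S y => centered (Measure.pi (marginal μ s))
      (sampleSum fun i u => psiR (p.1.1 i u) (p.1.2 i u))) x ∂Measure.pi (marginal μ s) :=
  if_pos ‹_›

theorem wS_le_of_weakVCMajorLE (hn : 0 < n) (hSd : ∀ t ∈ S, IsDensityT μ t) (hS : S.Countable)
    {d D : ℕ} (hd : 0 < d) (hD : D = min d n)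
    (hVC : WeakVCMajorLE {f : (Σ i, 𝒳 i) → ℝ |
      ∃ t ∈ S, ∃ t' ∈ S, f = fun p => psiR (t p.1 p.2) (t' p.1 p.2)} d)
    (hs : IsDensityT μ s) (hy : 0 ≤ y) :
    wS μ s S y ≤ max 1 (16 * y * √(vcEntropy n D) * log (exp 1 * n / D)
      + 16 * vcEntropy n D + 8 * D) := by
  rcases isEmpty_or_nonempty (BallPair μ s S y) with hempty | hne
  · rw [wS, if_neg (not_nonempty_iff.2 hempty)]
    exact le_max_left _ _
  have : Nonempty (Fin n) := ⟨⟨0, hn⟩⟩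
  have := countable_ballPair (μ := μ) (s := s) (y := y) hS
  have := hs.isProbabilityMeasure_marginal
  have hsecond (p : BallPair μ s S y) :
      ∑ i, ∫ u, psiR (p.1.1 i u) (p.1.2 i u) ^ 2 ∂marginal μ s i ≤ 8 * y ^ 2 := by
    have hball := pow_le_pow_left₀ (sqrt_nonneg _) p.2.2.2.1 2
    have hball' := pow_le_pow_left₀ (sqrt_nonneg _) p.2.2.2.2 2
    refine (hs.sum_integral_psiR_sq_le (hSd _ p.2.1) (hSd _ p.2.2.1)).trans ?_
    rw [bH, bH]
    linarith
  have hmain := integral_supAbs_centered_le_of_weakVCMajorLE (marginal μ s)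
    (f := fun (p : BallPair μ s S y) i u => psiR (p.1.1 i u) (p.1.2 i u))
    (fun p i => measurable_psiR (hSd _ p.2.1 i).1 (hSd _ p.2.2.1 i).1 (hSd _ p.2.1 i).2.1
      (hSd _ p.2.2.1 i).2.1)
    (fun p i u => abs_psiR_le_one ((hSd _ p.2.1 i).2.1 u) ((hSd _ p.2.2.1 i).2.1 u)) hsecond hd
    (hVC.mono (range_subset_iff.2 fun p => ⟨_, p.2.1, _, p.2.2.1, rfl⟩))
    (Fintype.card_fin n).symm hD fun p =>
      ⟨⟨p.1.swap, p.2.2.1, p.2.1, p.2.2.2.2, p.2.2.2.1⟩, by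
        ext i u
        exact psiR_swap ((hSd _ p.2.1 i).2.1 u) ((hSd _ p.2.2.1 i).2.1 u)⟩
  rw [wS_eq_integral_supAbs]
  refine (hmain.trans_eq ?_).trans (le_max_right _ _)
  rw [show 2 * (8 * y ^ 2) * vcEntropy n D = (4 * y) ^ 2 * vcEntropy n D by ring,
    sqrt_mul (sq_nonneg _), sqrt_sq (by positivity)]
  ring

end Hellinger

section Radius

variable {n D : ℕ}

/-- The rate `√(c̄ₙ D) [log(en/D)]^{3/2}` of the theorem, up to its numerical constant. -/
def vcRate (n D : ℕ) : ℝ :=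
  √((1 + log 2 / log (exp 1 * n)) * D) * log (exp 1 * n / D) ^ ((3 : ℝ) / 2)

lemma sqrt_vcEntropy_mul_log (hD : 0 < D) (hDn : D ≤ n) :
    √(vcEntropy n D) * log (exp 1 * n / D) = vcRate n D := by
  have hL : 0 < log (exp 1 * n / D) :=
    one_pos.trans_le (one_le_log_exp_one_mul_div (by exact_mod_cast hD) (by exact_mod_cast hDn))
  rw [vcEntropy, vcRate, sqrt_mul' _ hL.le, mul_assoc, sqrt_eq_rpow (log _),
    ← rpow_add_one hL.ne']
  norm_num

lemma cast_le_vcEntropy (hD : 0 < D) (hDn : D ≤ n) : D ≤ vcEntropy n D := by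
  have hL := one_le_log_exp_one_mul_div (x := n) (y := D) (by exact_mod_cast hD)
    (by exact_mod_cast hDn)
  have hc := one_le_one_add_log_two_div (hD.trans_le hDn)
  rw [vcEntropy, mul_right_comm]
  exact le_mul_of_one_le_left D.cast_nonneg (one_le_mul_of_one_le_of_one_le hc hL)

lemma sqrt_vcEntropy_le_vcRate (hD : 0 < D) (hDn : D ≤ n) : √(vcEntropy n D) ≤ vcRate n D := by
  rw [← sqrt_vcEntropy_mul_log hD hDn]
  exact le_mul_of_one_le_right (sqrt_nonneg _)
    (one_le_log_exp_one_mul_div (by exact_mod_cast hD) (by exact_mod_cast hDn))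

lemma max_le_of_vcRate_lt (hD : 0 < D) (hDn : D ≤ n) {y : ℝ} (hy : 2750 * vcRate n D < y) :
    max 1 (16 * y * √(vcEntropy n D) * log (exp 1 * n / D) + 16 * vcEntropy n D + 8 * D) ≤
      6 / 1000 * y ^ 2 := by
  have hDG := cast_le_vcEntropy hD hDn
  have hr := sqrt_vcEntropy_le_vcRate hD hDn
  have hD1 : (1 : ℝ) ≤ D := by exact_mod_cast hD
  have hr1 : 1 ≤ vcRate n D := (one_le_sqrt.2 (hD1.trans hDG)).trans hr
  have hG : vcEntropy n D ≤ vcRate n D ^ 2 := (sqrt_le_left (by positivity)).1 hr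
  rw [mul_assoc (16 * y), sqrt_vcEntropy_mul_log hD hDn]
  have hy0 : 0 ≤ y := by linarith
  have hry : vcRate n D ≤ y / 2750 := by linarith
  refine max_le ?_ ?_
  · calc (1 : ℝ)
      _ ≤ 6 / 1000 * 2750 ^ 2 := by norm_num
      _ ≤ 6 / 1000 * y ^ 2 := by gcongr; linarith
  · calc 16 * y * vcRate n D + 16 * vcEntropy n D + 8 * D
      _ ≤ 16 * y * vcRate n D + 24 * vcRate n D ^ 2 := by linarith
      _ ≤ 16 * y * (y / 2750) + 24 * (y / 2750) ^ 2 := by gcongr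
      _ ≤ 6 / 1000 * y ^ 2 := by linarith [sq_nonneg y]

end Radius

theorem statement_6_general
    {n : ℕ} {𝒳 : Fin n → Type*} [∀ i, MeasurableSpace (𝒳 i)]
    (μ : ∀ i, Measure (𝒳 i))
    (hn : 0 < n)
    (S : Set (∀ i, 𝒳 i → ℝ))
    (hSd : ∀ t ∈ S, IsDensityT μ t) (hScount : S.Countable)
    (d : ℕ) (hd : 1 ≤ d)
    (hVC : WeakVCMajorLE
      {f : (Σ i : Fin n, 𝒳 i) → ℝ |
        ∃ t ∈ S, ∃ t' ∈ S, f = fun p => psiR (t p.1 p.2) (t' p.1 p.2)} d)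
    (s : ∀ i, 𝒳 i → ℝ) (hs : IsDensityT μ s) :
    epsS μ s S ≤
      (11 * 1000 / 4) * Real.sqrt ((1 + Real.log 2 / Real.log (Real.exp 1 * n)) * (min d n : ℕ))
        * Real.log (Real.exp 1 * n / (min d n : ℕ)) ^ ((3 : ℝ) / 2) := by
  have hD : 0 < min d n := lt_min hd hn
  have hDn : min d n ≤ n := min_le_right d n
  have hrate : 0 ≤ vcRate n (min d n) := (sqrt_nonneg _).trans (sqrt_vcEntropy_le_vcRate hD hDn)
  rw [mul_assoc, ← vcRate, show (11 * 1000 / 4 : ℝ) = 2750 by norm_num]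
  refine Real.sSup_le (fun y ⟨hy1, hyw⟩ => le_of_not_gt fun hlt => hyw.not_ge ?_) (by positivity)
  exact (wS_le_of_weakVCMajorLE hn hSd hScount hd rfl hVC hs (zero_le_one.trans hy1)).trans
    (max_le_of_vcRate_lt hD hDn hlt)

theorem statement_6
    {n : ℕ} {𝒳 : Fin n → Type*} [∀ i, MeasurableSpace (𝒳 i)]
    (μ : ∀ i, Measure (𝒳 i)) [∀ i, SigmaFinite (μ i)]
    (hn : 0 < n)
    (Sbar S : Set (∀ i, 𝒳 i → ℝ))
    (hmodel : ∀ t ∈ Sbar, IsDensityT μ t)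
    (hSsub : S ⊆ Sbar) (hScount : S.Countable)
    (d : ℕ) (hd : 1 ≤ d)
    -- the class ℱ on 𝒳̄ = ⋃ᵢ {i}×𝒳ᵢ is weak VC-major with dimension at most d
    (hVC : WeakVCMajorLE
      {f : (Σ i : Fin n, 𝒳 i) → ℝ |
        ∃ t ∈ Sbar, ∃ t' ∈ Sbar, f = fun p => psiR (t p.1 p.2) (t' p.1 p.2)} d)
    (s : ∀ i, 𝒳 i → ℝ) (hs : IsDensityT μ s) :
    epsS μ s S ≤
      (11 * 1000 / 4) * Real.sqrt ((1 + Real.log 2 / Real.log (Real.exp 1 * n)) * (min d n : ℕ))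
        * Real.log (Real.exp 1 * n / (min d n : ℕ)) ^ ((3 : ℝ) / 2) := by
  exact statement_6_general μ hn S (fun t ht => hmodel t (hSsub ht)) hScount d hd
    (hVC.mono fun f ⟨t, ht, t', ht', hf⟩ => ⟨t, hSsub ht, t', hSsub ht', hf⟩) s hs

end
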